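/- For every finite set S of natural numbers, (√2 − 1) · Σ_{k ∈ S} √(2^k) ≤ √(Σ_{k ∈ S} 2^k). (Equivalently, writing w = Σ_{k ∈ S} 2^k for a sum of distinct powers of 2 with exponents k₁ < k₂ < ⋯ < k_K, one has √w ≥ (√2 − 1) Σ_{l=1}^{K} √(2^{k_l}).) -/

import Mathlib

/-! Add the terms in increasing order. If `W` is the sum so far and `2 ^ n` the next term, then
`W ≤ 2 ^ n`; by concavity the increment `√(W + 2 ^ n) - √W` decreases in `W`, so it is at least its
value `(√2 - 1) √(2 ^ n)` at `W = 2 ^ n`. For a base `b > 1` the powers below `n` sum to at most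
`b ^ n / (b - 1)`, and the increment at that point is `(√b - 1) / √(b - 1) * √(b ^ n)`. -/

theorem sqrt_sub_one_mul_sqrt_add_le {b x y : ℝ} (hb : 1 ≤ b) (hx : 0 ≤ x)
    (hxy : (b - 1) * x ≤ y) :
    (√b - 1) * √y + √(b - 1) * √x ≤ √(b - 1) * √(x + y) := by
  have hb' : 0 ≤ b - 1 := sub_nonneg.2 hb
  have hc : 0 ≤ √b - 1 := sub_nonneg.2 (Real.one_le_sqrt.2 hb)
  have hy : 0 ≤ y := (mul_nonneg hb' hx).trans hxy
  have hsqrt : √((b - 1) * x) ≤ √y := Real.sqrt_le_sqrt hxy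
  rw [← Real.sqrt_mul hb', ← Real.sqrt_mul hb']
  apply Real.le_sqrt_of_sq_le
  calc ((√b - 1) * √y + √((b - 1) * x)) ^ 2
      = (√b - 1) ^ 2 * √y ^ 2 + 2 * (√b - 1) * √y * √((b - 1) * x) + √((b - 1) * x) ^ 2 := by
        ring
    _ ≤ (√b - 1) ^ 2 * √y ^ 2 + 2 * (√b - 1) * √y * √y + √((b - 1) * x) ^ 2 := by gcongr
    _ = (√b ^ 2 - 1) * √y ^ 2 + √((b - 1) * x) ^ 2 := by ring
    _ = (b - 1) * (x + y) := by
        rw [Real.sq_sqrt (zero_le_one.trans hb), Real.sq_sqrt hy,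
          Real.sq_sqrt (mul_nonneg hb' hx)]
        ring

theorem sqrt_sub_one_mul_sum_sqrt_le {ι : Type*} [LinearOrder ι] {s : Finset ι} {a : ι → ℝ}
    {b : ℝ} (hb : 1 ≤ b) (ha : ∀ i ∈ s, 0 ≤ a i)
    (hs : ∀ i ∈ s, (b - 1) * ∑ j ∈ s with j < i, a j ≤ a i) :
    (√b - 1) * ∑ i ∈ s, √(a i) ≤ √(b - 1) * √(∑ i ∈ s, a i) := by
  induction s using Finset.induction_on_max with
  | empty => simp
  | insert m s hm ih =>
    have hms : m ∉ s := fun h => (hm m h).false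
    rw [Finset.forall_mem_insert] at ha hs
    have hsum : (b - 1) * ∑ i ∈ s, a i ≤ a m := by
      simpa [Finset.filter_insert, Finset.filter_true_of_mem hm] using hs.1
    have hs' : ∀ i ∈ s, (b - 1) * ∑ j ∈ s with j < i, a j ≤ a i := fun i hi => by
      simpa [Finset.filter_insert, (hm i hi).not_gt] using hs.2 i hi
    calc (√b - 1) * ∑ i ∈ insert m s, √(a i)
        = (√b - 1) * √(a m) + (√b - 1) * ∑ i ∈ s, √(a i) := by
          rw [Finset.sum_insert hms, mul_add]
      _ ≤ (√b - 1) * √(a m) + √(b - 1) * √(∑ i ∈ s, a i) :=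
          add_le_add_right (ih ha.2 hs') _
      _ ≤ √(b - 1) * √(∑ i ∈ s, a i + a m) :=
          sqrt_sub_one_mul_sqrt_add_le hb (Finset.sum_nonneg ha.2) hsum
      _ = √(b - 1) * √(∑ i ∈ insert m s, a i) := by rw [Finset.sum_insert hms, add_comm]

theorem sub_one_mul_sum_pow_le_pow {R : Type*} [Ring R] [PartialOrder R] [IsOrderedRing R] {b : R}
    (hb : 1 ≤ b) {s : Finset ℕ} {n : ℕ} (hs : ∀ k ∈ s, k < n) :
    (b - 1) * ∑ k ∈ s, b ^ k ≤ b ^ n := by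
  have hb₀ : 0 ≤ b := zero_le_one.trans hb
  have hsn : s ⊆ Finset.range n := fun k hk => Finset.mem_range.2 (hs k hk)
  calc (b - 1) * ∑ k ∈ s, b ^ k
      ≤ (b - 1) * ∑ k ∈ Finset.range n, b ^ k :=
        mul_le_mul_of_nonneg_left
          (Finset.sum_le_sum_of_subset_of_nonneg hsn fun k _ _ => pow_nonneg hb₀ k)
          (sub_nonneg.2 hb)
    _ = b ^ n - 1 := mul_geom_sum b n
    _ ≤ b ^ n := sub_le_self _ zero_le_one

theorem sqrt_two_sub_one_mul_sum_sqrt_pow_le_general {b : ℝ} (hb : 1 ≤ b) (S : Finset ℕ) :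
    (√b - 1) * ∑ k ∈ S, √(b ^ k) ≤ √(b - 1) * √(∑ k ∈ S, b ^ k) :=
  sqrt_sub_one_mul_sum_sqrt_le hb (fun k _ => pow_nonneg (zero_le_one.trans hb) k) fun _ _ =>
    sub_one_mul_sum_pow_le_pow hb fun _ hj => (Finset.mem_filter.1 hj).2

/-- For every finite set `S` of natural numbers,
`(√2 − 1) · Σ_{k ∈ S} √(2^k) ≤ √(Σ_{k ∈ S} 2^k)`. -/
theorem sqrt_two_sub_one_mul_sum_sqrt_pow_le (S : Finset ℕ) :
    (Real.sqrt 2 - 1) * ∑ k ∈ S, Real.sqrt ((2 : ℝ) ^ k) ≤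
      Real.sqrt (∑ k ∈ S, (2 : ℝ) ^ k) := by
  have h := sqrt_two_sub_one_mul_sum_sqrt_pow_le_general one_le_two S
  rwa [show (2 : ℝ) - 1 = 1 by norm_num, Real.sqrt_one, one_mul] at h
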